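/- arXiv:1602.05843 — 2 statements merged into one kernel-verified Lean document; each statement's English description precedes it below -/
import Mathlib

section
/- Let R = k[x^d, x^e y^ℓ, x^f y^m, y^n] with d,n>0, e,f,ℓ,m ≥ 0, (e,ℓ) ≠ (0,0). Then R is Cohen–Macaulay if and only if g_2 ≥ 0 and h_2 ≥ 0, where -a_2(e,ℓ) + b_2(f,m) = (g_2,h_2) is the minimal relation of the four-generator setup. -/
open MvPolynomial

set_option synthInstance.maxHeartbeats 1000000
set_option maxHeartbeats 2000000

/-- The exponent semigroup. -/
def TT (d n e f l m : ℕ) (u v : ℕ) : Prop :=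
  ∃ i j p q : ℕ, u = i * e + j * f + p * d ∧ v = i * l + j * m + q * n

lemma ord_iff (d n e l : ℕ) (k : ℤ) :
    ((addOrderOf (((e : ZMod d), (l : ZMod n)) : ZMod d × ZMod n) : ℕ) : ℤ) ∣ k ↔
      (d : ℤ) ∣ k * e ∧ (n : ℤ) ∣ k * l := by
  rw [addOrderOf_dvd_iff_zsmul_eq_zero, Prod.ext_iff]
  simp only [Prod.smul_mk, Prod.fst_zero, Prod.snd_zero]
  rw [← ZMod.intCast_zmod_eq_zero_iff_dvd, ← ZMod.intCast_zmod_eq_zero_iff_dvd]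
  simp [zsmul_eq_mul]

lemma lt_unique {N : ℕ} {a b : ℕ} (ha : a < N) (hb : b < N) (h : (N : ℤ) ∣ (a : ℤ) - b) :
    a = b := by
  have := Int.eq_zero_of_abs_lt_dvd h (by rw [abs_lt]; constructor <;> omega)
  omega

/-- Normal form of the `i` coordinate. -/
lemma TT_reduce_i {d n e f l m N : ℕ} (hN0 : 0 < N)
    (hN : ∀ k : ℤ, (N : ℤ) ∣ k ↔ (d : ℤ) ∣ k * e ∧ (n : ℤ) ∣ k * l) (i j p q : ℕ) :
    ∃ i' p' q' : ℕ, i' < N ∧ i * e + j * f + p * d = i' * e + j * f + p' * d ∧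
      i * l + j * m + q * n = i' * l + j * m + q' * n := by
  obtain ⟨h1, h2⟩ := (hN N).1 dvd_rfl
  obtain ⟨α, hα⟩ : d ∣ N * e := by exact_mod_cast h1
  obtain ⟨β, hβ⟩ : n ∣ N * l := by exact_mod_cast h2
  have hi := Nat.mod_add_div i N
  refine ⟨i % N, p + (i / N) * α, q + (i / N) * β, Nat.mod_lt _ hN0, ?_, ?_⟩
  · conv_lhs => rw [← hi]
    linear_combination (i / N) * hα
  · conv_lhs => rw [← hi]
    linear_combination (i / N) * hβ

lemma core_forward {d n e f l m a2 b2 N : ℕ} (hN0 : 0 < N)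
    (hN : ∀ k : ℤ, (N : ℤ) ∣ k ↔ (d : ℤ) ∣ k * e ∧ (n : ℤ) ∣ k * l)
    (ha2 : a2 < N)
    (hmin2 : ∀ b' : ℕ, 0 < b' →
      (∃ (a' : ℕ) (g h : ℤ), a' < N ∧
        -(a' : ℤ) * e + b' * f = g ∧ -(a' : ℤ) * l + b' * m = h ∧
        (d : ℤ) ∣ g ∧ (n : ℤ) ∣ h ∧ (0 < g ∨ 0 < h ∨ (g = 0 ∧ h = 0))) → b2 ≤ b')
    {u v G1 H1 G2 H2 : ℕ} (hw : TT d n e f l m u v)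
    (h1 : b2 * f = u + G1 * d) (h2 : b2 * m = v + H1 * n)
    (h3 : a2 * e = u + G2 * d) (h4 : a2 * l = v + H2 * n)
    (hp1 : 0 < G1 * d ∨ 0 < H1 * n) (hp2 : 0 < G2 * d ∨ 0 < H2 * n) : False := by
  obtain ⟨i, j, p, q, hu, hv⟩ := hw
  obtain ⟨i', p', q', hi', hx, hy⟩ := TT_reduce_i (f := f) (m := m) hN0 hN i j p q
  rw [hx] at hu
  rw [hy] at hv
  clear hx hy
  have hj : j < b2 := by
    by_contra hj
    push Not at hj
    have A : b2 * f ≤ j * f := Nat.mul_le_mul_right _ hj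
    have B : b2 * m ≤ j * m := Nat.mul_le_mul_right _ hj
    have := Nat.zero_le (i' * e)
    omega
  obtain ⟨b, rfl⟩ : ∃ b, b2 = j + b := ⟨b2 - j, by omega⟩
  have hb : 0 < b := by omega
  have e1 : (-(i' : ℤ) * e + b * f) = (((p' + G1) * d : ℕ) : ℤ) := by
    subst hu; zify at h1 ⊢; linear_combination h1
  have e2 : (-(i' : ℤ) * l + b * m) = (((q' + H1) * n : ℕ) : ℤ) := by
    subst hv; zify at h2 ⊢; linear_combination h2
  have := hmin2 b hb ⟨i', _, _, hi', e1, e2, by push_cast; exact dvd_mul_left _ _,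
    by push_cast; exact dvd_mul_left _ _, by
      rw [add_mul, add_mul]
      rcases hp1 with h | h
      · left; push_cast; zify at h; positivity
      · right; left; push_cast; zify at h; positivity⟩
  have hj0 : j = 0 := by omega
  subst hj0
  have hia : a2 = i' := by
    apply lt_unique ha2 hi'
    rw [hN]
    constructor
    · refine ⟨p' + G2, ?_⟩
      subst hu; zify at h3; linear_combination h3
    · refine ⟨q' + H2, ?_⟩
      subst hv; zify at h4; linear_combination h4
  subst hia
  omega

lemma reg_iter {d n : ℕ} {T : ℕ → ℕ → Prop}
    (hT : ∀ u v u' v', T u v → T u' v' → u = u' + d → v + n = v' → T u' v)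
    (hTn : ∀ u v, T u v → T u (v + n)) (hTd : ∀ u v, T u v → T (u + d) v) :
    ∀ p q u v, T (u + p * d) v → T u (v + q * n) → T u v := by
  have c0 : ∀ q u v, T u v → T u (v + q * n) := by
    intro q
    induction q with
    | zero => intro u v h; simpa using h
    | succ q ih =>
      intro u v h
      have := hTn _ _ (ih u v h)
      rwa [add_assoc, ← Nat.succ_mul] at this
  have c1 : ∀ q u v, T (u + d) v → T u (v + q * n) → T u v := by
    intro q
    induction q with
    | zero => intro u v _ h'; simpa using h'
    | succ q ih =>
      intro u v h h'
      refine ih u v h (hT (u + d) _ u _ (c0 q _ _ h) h' rfl ?_)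
      ring
  intro p
  induction p with
  | zero => intro q u v h _; simpa using h
  | succ p ih =>
    intro q u v h h'
    have h2 : T (u + p * d + d) v := by
      have e : u + p * d + d = u + (p + 1) * d := by ring
      rwa [e]
    have h3 : ∀ p, T (u + p * d) (v + q * n) := by
      intro p
      induction p with
      | zero => simpa using h'
      | succ p ih =>
        have := hTd _ _ ih
        rwa [add_assoc, ← Nat.succ_mul] at this
    exact ih q u v (c1 q _ _ h2 (h3 p)) h'

lemma core_backward {d n e f l m a2 b2 N : ℕ} {g2 h2 : ℤ} (hd : 0 < d) (hn : 0 < n)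
    (hN0 : 0 < N)
    (hN : ∀ k : ℤ, (N : ℤ) ∣ k ↔ (d : ℤ) ∣ k * e ∧ (n : ℤ) ∣ k * l)
    (hb2 : 0 < b2)
    (hrel2x : -(a2 : ℤ) * e + b2 * f = g2) (hrel2y : -(a2 : ℤ) * l + b2 * m = h2)
    (hdvd2 : (d : ℤ) ∣ g2 ∧ (n : ℤ) ∣ h2)
    (hg : 0 ≤ g2) (hh : 0 ≤ h2)
    (hmin2 : ∀ b' : ℕ, 0 < b' →
      (∃ (a' : ℕ) (g h : ℤ), a' < N ∧
        -(a' : ℤ) * e + b' * f = g ∧ -(a' : ℤ) * l + b' * m = h ∧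
        (d : ℤ) ∣ g ∧ (n : ℤ) ∣ h ∧ (0 < g ∨ 0 < h ∨ (g = 0 ∧ h = 0))) → b2 ≤ b')
    {u v u' v' : ℕ} (hT : TT d n e f l m u v) (hT' : TT d n e f l m u' v')
    (hu : u = u' + d) (hv : v + n = v') : TT d n e f l m u' v := by
  have nf : ∀ u v, TT d n e f l m u v → ∃ i j p q : ℕ, i < N ∧ j < b2 ∧
      u = i * e + j * f + p * d ∧ v = i * l + j * m + q * n := by
    rintro u v ⟨i, j, p, q, rfl, rfl⟩
    obtain ⟨⟨α, hα⟩, ⟨β, hβ⟩⟩ := hdvd2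
    have hα0 : 0 ≤ α := by
      by_contra h; push Not at h
      have : (d : ℤ) * α < 0 := mul_neg_of_pos_of_neg (by exact_mod_cast hd) h
      omega
    have hβ0 : 0 ≤ β := by
      by_contra h; push Not at h
      have : (n : ℤ) * β < 0 := mul_neg_of_pos_of_neg (by exact_mod_cast hn) h
      omega
    lift α to ℕ using hα0
    lift β to ℕ using hβ0
    have E1 : b2 * f = a2 * e + d * α := by zify; linear_combination hrel2x + hα
    have E2 : b2 * m = a2 * l + n * β := by zify; linear_combination hrel2y + hβ
    have hj := Nat.mod_add_div j b2
    obtain ⟨i', p', q', hi', hx, hy⟩ := TT_reduce_i (f := f) (m := m) hN0 hN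
      (i + (j / b2) * a2) (j % b2) (p + (j / b2) * α) (q + (j / b2) * β)
    refine ⟨i', j % b2, p', q', hi', Nat.mod_lt _ hb2, ?_, ?_⟩
    · rw [← hx]
      conv_lhs => rw [← hj]
      linear_combination (j / b2) * E1
    · rw [← hy]
      conv_lhs => rw [← hj]
      linear_combination (j / b2) * E2
  have cmp : ∀ i j i' j' : ℕ, i < N → j < b2 → i' < N → j' < b2 → j' ≤ j →
      (d : ℤ) ∣ ((i : ℤ) * e + j * f) - (i' * e + j' * f) →
      (n : ℤ) ∣ ((i : ℤ) * l + j * m) - (i' * l + j' * m) →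
      (i * e + j * f ≤ i' * e + j' * f ∧ i * l + j * m ≤ i' * l + j' * m) ∨
      (i' * e + j' * f ≤ i * e + j * f ∧ i' * l + j' * m ≤ i * l + j * m) := by
    intro i j i' j' hi hj hi' hj' hjj D1 D2
    rcases le_or_gt i' i with h | h
    · right
      constructor <;> gcongr
    rcases Nat.eq_or_lt_of_le hjj with h' | h'
    · subst h'
      left
      constructor <;> gcongr
    · left
      have hno := fun hc => hmin2 (j - j') (by omega) ⟨i' - i, _, _, by omega, rfl, rfl, hc⟩
      rw [Nat.cast_sub h.le, Nat.cast_sub hjj] at hno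
      have X : -((i' : ℤ) - i) * e + (j - j') * f = ((i : ℤ) * e + j * f) - (i' * e + j' * f) := by
        ring
      have Y : -((i' : ℤ) - i) * l + (j - j') * m = ((i : ℤ) * l + j * m) - (i' * l + j' * m) := by
        ring
      rw [X, Y] at hno
      have hno2 : ¬ (0 < ((i : ℤ) * e + j * f) - (i' * e + j' * f) ∨
          0 < ((i : ℤ) * l + j * m) - (i' * l + j' * m)) := by
        intro hc
        have := hno ⟨D1, D2, by tauto⟩
        omega
      push Not at hno2
      zify
      constructor <;> linarith [hno2.1, hno2.2]
  obtain ⟨i, j, p, q, hi, hj, hx, hy⟩ := nf u v hT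
  obtain ⟨i', j', p', q', hi', hj', hx', hy'⟩ := nf u' v' hT'
  have D1 : (d : ℤ) ∣ ((i : ℤ) * e + j * f) - (i' * e + j' * f) := by
    refine ⟨p' + 1 - p, ?_⟩
    zify at hx hx' hu
    linear_combination hx' - hx + hu
  have D2 : (n : ℤ) ∣ ((i : ℤ) * l + j * m) - (i' * l + j' * m) := by
    refine ⟨q' - 1 - q, ?_⟩
    zify at hy hy' hv
    linear_combination hy' - hy + hv
  have key : (i * e + j * f ≤ i' * e + j' * f ∧ i * l + j * m ≤ i' * l + j' * m) ∨
      (i' * e + j' * f ≤ i * e + j * f ∧ i' * l + j' * m ≤ i * l + j * m) := by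
    rcases le_total j' j with h | h
    · exact cmp i j i' j' hi hj hi' hj' h D1 D2
    · exact (cmp i' j' i j hi' hj' hi hj h ((dvd_sub_comm).1 D1) ((dvd_sub_comm).1 D2)).symm
  rcases key with ⟨k1, k2⟩ | ⟨k1, k2⟩
  ·
    obtain ⟨α, hα⟩ := D1
    have : α ≤ 0 := by
      by_contra h; push Not at h
      have : 0 < (d : ℤ) * α := mul_pos (by exact_mod_cast hd) h
      zify at k1
      omega
    refine ⟨i, j, p' + α.natAbs, q, ?_, hy⟩
    zify
    rw [abs_of_nonpos this]
    zify at hx'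
    linear_combination hx' - hα
  · obtain ⟨β, hβ⟩ := D2
    have : 0 ≤ β := by
      by_contra h; push Not at h
      have : (n : ℤ) * β < 0 := mul_neg_of_pos_of_neg (by exact_mod_cast hn) h
      zify at k2
      omega
    refine ⟨i', j', p', q + β.natAbs, hx', ?_⟩
    zify
    rw [abs_of_nonneg this]
    zify at hy
    linear_combination hy + hβ

/-- Exponent vector. -/
noncomputable def ev (u v : ℕ) : Fin 2 →₀ ℕ := Finsupp.single 0 u + Finsupp.single 1 v

lemma ev_eta (s : Fin 2 →₀ ℕ) : ev (s 0) (s 1) = s := by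
  ext i; fin_cases i <;> simp [ev]

@[simp] lemma ev_zero (u v : ℕ) : ev u v 0 = u := by simp [ev]
@[simp] lemma ev_one (u v : ℕ) : ev u v 1 = v := by simp [ev]

lemma mono_ev {k : Type*} [Field k] (u v : ℕ) :
    (monomial (ev u v) (1 : k)) = X 0 ^ u * X 1 ^ v := by
  rw [X_pow_eq_monomial, X_pow_eq_monomial, monomial_mul, one_mul, ev]

lemma TT_add {d n e f l m u v u' v' : ℕ} (h : TT d n e f l m u v) (h' : TT d n e f l m u' v') :
    TT d n e f l m (u + u') (v + v') := by
  obtain ⟨i, j, p, q, rfl, rfl⟩ := h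
  obtain ⟨i', j', p', q', rfl, rfl⟩ := h'
  exact ⟨i + i', j + j', p + p', q + q', by ring, by ring⟩

lemma mem_R_iff {k : Type*} [Field k] (d n e f l m : ℕ) (P : MvPolynomial (Fin 2) k) :
    P ∈ Algebra.adjoin k
      ({X 0 ^ d, X 0 ^ e * X 1 ^ l, X 0 ^ f * X 1 ^ m, X 1 ^ n} :
        Set (MvPolynomial (Fin 2) k)) ↔ ∀ s, coeff s P ≠ 0 → TT d n e f l m (s 0) (s 1) := by
  classical
  constructor
  · intro h
    have hm : ∀ u v, TT d n e f l m u v → ∀ s, coeff s (X 0 ^ u * X 1 ^ v : MvPolynomial (Fin 2) k)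
        ≠ 0 → TT d n e f l m (s 0) (s 1) := by
      intro u v hT s hs
      rw [← mono_ev, coeff_monomial] at hs
      have : ev u v = s := by by_contra hne; simp [hne] at hs
      subst this; simpa using hT
    induction h using Algebra.adjoin_induction with
    | mem x hx =>
      simp only [Set.mem_insert_iff, Set.mem_singleton_iff] at hx
      rcases hx with rfl | rfl | rfl | rfl
      · simpa using hm d 0 ⟨0, 0, 1, 0, by simp, by simp⟩
      · exact hm e l ⟨1, 0, 0, 0, by simp, by simp⟩
      · exact hm f m ⟨0, 1, 0, 0, by simp, by simp⟩
      · simpa using hm 0 n ⟨0, 0, 0, 1, by simp, by simp⟩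
    | algebraMap r =>
      intro s hs
      rw [algebraMap_eq, coeff_C] at hs
      have : 0 = s := by by_contra hne; simp [hne] at hs
      subst this
      exact ⟨0, 0, 0, 0, by simp, by simp⟩
    | add x y _ _ hx hy =>
      intro s hs
      rw [coeff_add] at hs
      by_cases h : coeff s x = 0
      · exact hy s (by intro h'; simp [h, h'] at hs)
      · exact hx s h
    | mul x y _ _ hx hy =>
      intro s hs
      rw [coeff_mul] at hs
      obtain ⟨⟨a, b⟩, hab, hne⟩ := Finset.exists_ne_zero_of_sum_ne_zero hs
      rw [Finset.HasAntidiagonal.mem_antidiagonal] at hab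
      simp only at hab hne
      subst hab
      exact TT_add (hx a (left_ne_zero_of_mul hne)) (hy b (right_ne_zero_of_mul hne))
  · intro h
    rw [P.as_sum]
    refine Subalgebra.sum_mem _ fun s hs => ?_
    obtain ⟨i, j, p, q, h0, h1⟩ := h s (mem_support_iff.1 hs)
    have : monomial s (coeff s P) = coeff s P •
        (((X 0 ^ e * X 1 ^ l) ^ i * (X 0 ^ f * X 1 ^ m) ^ j * (X 0 ^ d) ^ p * (X 1 ^ n) ^ q :
          MvPolynomial (Fin 2) k)) := by
      have e0 : monomial s (coeff s P) = coeff s P • monomial (ev (s 0) (s 1)) (1 : k) := by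
        rw [ev_eta, smul_monomial, smul_eq_mul, mul_one]
      rw [e0, mono_ev, h0, h1]
      congr 1
      ring
    rw [this]
    refine Subalgebra.smul_mem _ ?_ _
    refine mul_mem (mul_mem (mul_mem (pow_mem (Algebra.subset_adjoin ?_) _)
      (pow_mem (Algebra.subset_adjoin ?_) _)) (pow_mem (Algebra.subset_adjoin ?_) _))
      (pow_mem (Algebra.subset_adjoin ?_) _) <;> simp

open scoped Pointwise in
lemma regular_iff {A : Type*} [CommRing A] (x y : A) :
    RingTheory.Sequence.IsWeaklyRegular A [x, y] ↔
      (∀ r, x * r = 0 → r = 0) ∧ ∀ r s, y * r = x * s → ∃ t, r = x * t := by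
  rw [RingTheory.Sequence.isWeaklyRegular_cons_iff, RingTheory.Sequence.isWeaklyRegular_cons_iff]
  simp only [RingTheory.Sequence.IsWeaklyRegular.nil, and_true]
  refine and_congr ?_ ?_
  · rw [isSMulRegular_iff_right_eq_zero_of_smul]
    rfl
  · rw [isSMulRegular_iff_right_eq_zero_of_smul]
    have mem : ∀ r : A, r ∈ (x • (⊤ : Submodule A A)) ↔ ∃ t, r = x * t := by
      intro r
      rw [Submodule.mem_smul_pointwise_iff_exists]
      simp [eq_comm]
    constructor
    · intro h r s hrs
      have := h (Submodule.Quotient.mk r) (by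
        rw [← Submodule.Quotient.mk_smul, Submodule.Quotient.mk_eq_zero, mem]
        exact ⟨s, hrs⟩)
      rwa [Submodule.Quotient.mk_eq_zero, mem] at this
    · intro h r
      induction r using Submodule.Quotient.induction_on with
      | _ r =>
      intro hr
      rw [← Submodule.Quotient.mk_smul, Submodule.Quotient.mk_eq_zero, mem] at hr
      obtain ⟨s, hs⟩ := hr
      rw [Submodule.Quotient.mk_eq_zero, mem]
      exact h r s hs

lemma R_regular_iff {k : Type*} [Field k] {d n e f l m : ℕ} (hd : 0 < d) (hn : 0 < n)
    (R : Subalgebra k (MvPolynomial (Fin 2) k))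
    (hR : R = Algebra.adjoin k
      ({X 0 ^ d, X 0 ^ e * X 1 ^ l, X 0 ^ f * X 1 ^ m, X 1 ^ n} :
        Set (MvPolynomial (Fin 2) k)))
    (xd yn : R)
    (hxd : (xd : MvPolynomial (Fin 2) k) = X 0 ^ d)
    (hyn : (yn : MvPolynomial (Fin 2) k) = X 1 ^ n) :
    RingTheory.Sequence.IsRegular R [xd, yn] ↔
      ∀ u v u' v', TT d n e f l m u v → TT d n e f l m u' v' → u = u' + d → v + n = v' →
        TT d n e f l m u' v := by
  classical
  have hmem : ∀ P, P ∈ R ↔ ∀ s, coeff s P ≠ 0 → TT d n e f l m (s 0) (s 1) := by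
    intro P; rw [hR]; exact mem_R_iff d n e f l m P
  have hmono : ∀ u v, TT d n e f l m u v → (X 0 ^ u * X 1 ^ v : MvPolynomial (Fin 2) k) ∈ R := by
    intro u v hT
    rw [hmem]
    intro s hs
    rw [← mono_ev, coeff_monomial] at hs
    have : ev u v = s := by by_contra hne; simp [hne] at hs
    subst this; simpa using hT
  have hmono' : ∀ u v, (X 0 ^ u * X 1 ^ v : MvPolynomial (Fin 2) k) ∈ R → TT d n e f l m u v := by
    intro u v h
    rw [hmem] at h
    have := h (ev u v) (by rw [← mono_ev, coeff_monomial]; simp)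
    simpa using this
  rw [RingTheory.Sequence.isRegular_iff, regular_iff]
  have hx0 : (X 0 ^ d : MvPolynomial (Fin 2) k) ≠ 0 := pow_ne_zero _ (X_ne_zero _)
  constructor
  · rintro ⟨⟨-, h⟩, -⟩ u v u' v' hT hT' hu hv
    obtain ⟨t, ht⟩ := h ⟨_, hmono u v hT⟩ ⟨_, hmono u' v' hT'⟩ (by
      apply Subtype.ext
      simp only [MulMemClass.coe_mul, hxd, hyn]
      rw [hu, ← hv]; ring)
    have ht2 := congrArg Subtype.val ht
    simp only [MulMemClass.coe_mul, hxd, hu] at ht2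
    have : (t : MvPolynomial (Fin 2) k) = X 0 ^ u' * X 1 ^ v := by
      apply mul_left_cancel₀ hx0
      rw [← ht2]; ring
    exact hmono' u' v (this ▸ t.2)
  · intro h
    refine ⟨⟨?_, ?_⟩, ?_⟩
    · intro r hr
      have := congrArg Subtype.val hr
      simp only [MulMemClass.coe_mul, hxd, ZeroMemClass.coe_zero] at this
      exact Subtype.ext ((mul_eq_zero.1 this).resolve_left hx0)
    · intro r s hrs
      have E := congrArg Subtype.val hrs
      simp only [MulMemClass.coe_mul, hxd, hyn] at E
      have hdvd : (X 0 ^ d : MvPolynomial (Fin 2) k) ∣ r := by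
        refine (X_prime : Prime (X 0 : MvPolynomial (Fin 2) k)).pow_dvd_of_dvd_mul_left d ?_ (⟨_, E⟩)
        intro hc
        have := (X_prime : Prime (X 0 : MvPolynomial (Fin 2) k)).dvd_of_dvd_pow hc
        rw [X_dvd_X] at this
        simp at this
      obtain ⟨t, ht⟩ := hdvd
      have hts : X 1 ^ n * t = (s : MvPolynomial (Fin 2) k) := by
        apply mul_left_cancel₀ hx0
        rw [← E, ht]; ring
      refine ⟨⟨t, ?_⟩, Subtype.ext (by simp [hxd, ht])⟩
      rw [hmem]
      intro w hw
      have h1 := (hmem _).1 r.2 (Finsupp.single 0 d + w) (by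
        rw [ht, X_pow_eq_monomial, coeff_monomial_mul]; simpa using hw)
      have h2 := (hmem _).1 s.2 (Finsupp.single 1 n + w) (by
        rw [← hts, X_pow_eq_monomial, coeff_monomial_mul]; simpa using hw)
      simp at h1 h2
      exact h _ _ _ _ h1 h2 (by ring) (by ring)
    · intro htop
      have h1 : (1 : R) ∈ (Ideal.ofList [xd, yn] • (⊤ : Submodule R R)) := by
        rw [← htop]; trivial
      rw [smul_eq_mul, Ideal.mul_top] at h1
      let φ : R →+* k := (constantCoeff).comp R.val.toRingHom
      have : Ideal.ofList [xd, yn] ≤ RingHom.ker φ := by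
        rw [Ideal.ofList, Ideal.span_le]
        intro z hz
        simp at hz
        rcases hz with rfl | rfl
        · simp [φ, RingHom.mem_ker, hxd, hd.ne']
        · simp [φ, RingHom.mem_ker, hyn, hn.ne']
      have := this h1
      simp [RingHom.mem_ker] at this

/-- Let `R = k[x^d, x^e y^ℓ, x^f y^m, y^n]` with `d, n > 0`, `(e,ℓ) ≠ (0,0)`.  Then `R` is
Cohen–Macaulay (equivalently `x^d, y^n` is a regular sequence on `R`) if and only if
`g₂ ≥ 0` and `h₂ ≥ 0`, where `-a₂(e,ℓ) + b₂(f,m) = (g₂,h₂)` is the minimal relation of the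
four-generator setup. -/
theorem stmt_12
    (d n e f l m : ℕ) (hd : 0 < d) (hn : 0 < n) (hel : (e, l) ≠ (0, 0))
    (a2 b2 a3 b3 : ℕ) (g2 h2 g3 h3 : ℤ)
    (hb2pos : 0 < b2)
    (ha2ord : a2 < addOrderOf (((e : ZMod d), (l : ZMod n)) : ZMod d × ZMod n))
    (hrel2x : -(a2 : ℤ) * e + b2 * f = g2) (hrel2y : -(a2 : ℤ) * l + b2 * m = h2)
    (hdvd2 : (d : ℤ) ∣ g2 ∧ (n : ℤ) ∣ h2)
    (hsign2 : 0 < g2 ∨ 0 < h2 ∨ (g2 = 0 ∧ h2 = 0))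
    (hmin2 : ∀ b' : ℕ, 0 < b' →
      (∃ (a' : ℕ) (g h : ℤ), a' < addOrderOf (((e : ZMod d), (l : ZMod n)) : ZMod d × ZMod n) ∧
        -(a' : ℤ) * e + b' * f = g ∧ -(a' : ℤ) * l + b' * m = h ∧
        (d : ℤ) ∣ g ∧ (n : ℤ) ∣ h ∧ (0 < g ∨ 0 < h ∨ (g = 0 ∧ h = 0))) → b2 ≤ b')
    (ha3pos : 0 < a3)
    (hb3ord : b3 < addOrderOf (((f : ZMod d), (m : ZMod n)) : ZMod d × ZMod n))
    (hrel3x : (a3 : ℤ) * e - b3 * f = g3) (hrel3y : (a3 : ℤ) * l - b3 * m = h3)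
    (hdvd3 : (d : ℤ) ∣ g3 ∧ (n : ℤ) ∣ h3)
    (hsign3 : 0 ≤ g3 ∧ 0 ≤ h3 ∧ ¬(g3 = 0 ∧ h3 = 0))
    (hmin3 : ∀ a' : ℕ, 0 < a' →
      (∃ (b' : ℕ) (g h : ℤ), b' < addOrderOf (((f : ZMod d), (m : ZMod n)) : ZMod d × ZMod n) ∧
        (a' : ℤ) * e - b' * f = g ∧ (a' : ℤ) * l - b' * m = h ∧
        (d : ℤ) ∣ g ∧ (n : ℤ) ∣ h ∧ 0 ≤ g ∧ 0 ≤ h ∧ ¬(g = 0 ∧ h = 0)) → a3 ≤ a')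
    (k : Type*) [Field k]
    (R : Subalgebra k (MvPolynomial (Fin 2) k))
    (hR : R = Algebra.adjoin k
      ({X 0 ^ d, X 0 ^ e * X 1 ^ l, X 0 ^ f * X 1 ^ m, X 1 ^ n} :
        Set (MvPolynomial (Fin 2) k)))
    (xd yn : R)
    (hxd : (xd : MvPolynomial (Fin 2) k) = X 0 ^ d)
    (hyn : (yn : MvPolynomial (Fin 2) k) = X 1 ^ n)
    :
    RingTheory.Sequence.IsRegular R [xd, yn] ↔ (0 ≤ g2 ∧ 0 ≤ h2) := by
  subst hR
  rw [R_regular_iff hd hn _ rfl xd yn hxd hyn]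
  have hN0 : 0 < addOrderOf (((e : ZMod d), (l : ZMod n)) : ZMod d × ZMod n) := by omega
  have hN := ord_iff d n e l
  constructor
  · intro hT
    have it := reg_iter hT
      (fun u v h => TT_add (u' := 0) (v' := n) h ⟨0, 0, 0, 1, by simp, by simp⟩)
      (fun u v h => TT_add (u' := d) (v' := 0) h ⟨0, 0, 1, 0, by simp, by simp⟩)
    have Ta : TT d n e f l m (a2 * e) (a2 * l) := ⟨a2, 0, 0, 0, by simp, by simp⟩
    have Tb : TT d n e f l m (b2 * f) (b2 * m) := ⟨0, b2, 0, 0, by simp, by simp⟩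
    by_contra hc
    obtain ⟨⟨α, hα⟩, ⟨β, hβ⟩⟩ := hdvd2
    have hd' : (0 : ℤ) < d := by exact_mod_cast hd
    have hn' : (0 : ℤ) < n := by exact_mod_cast hn
    have hcases : (g2 < 0 ∧ 0 < h2) ∨ (0 < g2 ∧ h2 < 0) := by omega
    rcases hcases with ⟨hg, hh⟩ | ⟨hg, hh⟩
    · rw [hα] at hg
      rw [hβ] at hh
      have hα0 : α < 0 := neg_of_mul_neg_right hg hd'.le
      have hβ0 : 0 < β := pos_of_mul_pos_right hh hn'.le
      obtain ⟨p, rfl⟩ : ∃ p : ℕ, α = -p := ⟨α.natAbs, by omega⟩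
      lift β to ℕ using hβ0.le
      have E1 : b2 * f + p * d = a2 * e := by zify; linear_combination hrel2x + hα
      have E2 : b2 * m = a2 * l + β * n := by zify; linear_combination hrel2y + hβ
      have hw := it p β (b2 * f) (a2 * l) (E1 ▸ Ta) (E2 ▸ Tb)
      exact core_forward (G1 := 0) (H1 := β) (G2 := p) (H2 := 0) hN0 hN ha2ord hmin2 hw
        (by simp) E2 E1.symm (by simp) (Or.inr (Nat.mul_pos (by omega) hn))
        (Or.inl (Nat.mul_pos (by omega) hd))
    · rw [hα] at hg
      rw [hβ] at hh
      have hα0 : 0 < α := pos_of_mul_pos_right hg hd'.le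
      have hβ0 : β < 0 := neg_of_mul_neg_right hh hn'.le
      obtain ⟨q, rfl⟩ : ∃ q : ℕ, β = -q := ⟨β.natAbs, by omega⟩
      lift α to ℕ using hα0.le
      have E1 : b2 * f = a2 * e + α * d := by zify; linear_combination hrel2x + hα
      have E2 : b2 * m + q * n = a2 * l := by zify; linear_combination hrel2y + hβ
      have hw := it α q (a2 * e) (b2 * m) (E1 ▸ Tb) (E2 ▸ Ta)
      exact core_forward (G1 := α) (H1 := 0) (G2 := 0) (H2 := q) hN0 hN ha2ord hmin2 hw
        E1 (by simp) (by simp) E2.symm (Or.inl (Nat.mul_pos (by omega) hd))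
        (Or.inr (Nat.mul_pos (by omega) hn))
  · rintro ⟨hg, hh⟩ u v u' v' hT hT' hu hv
    exact core_backward hd hn hN0 hN hb2pos hrel2x hrel2y hdvd2 hg hh hmin2 hT hT' hu hv
end

section
/- Let d,n > 0 and (e,ℓ) ≠ (0,0) with e,ℓ ≥ 0. Then the ring k[x^d, x^e y^ℓ, y^n] is Cohen–Macaulay. -/
open MvPolynomial

set_option synthInstance.maxHeartbeats 1000000
set_option maxHeartbeats 2000000

/-- The exponent semigroup. -/
def expS (d n e l : ℕ) (m : Fin 2 →₀ ℕ) : Prop :=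
  ∃ a b c : ℕ, m 0 = a * d + c * e ∧ m 1 = b * n + c * l

lemma expS_key (d n e l : ℕ) (hd : 0 < d) (s t : Fin 2 →₀ ℕ)
    (hs : expS d n e l s) (ht : expS d n e l t)
    (h : s + Finsupp.single 1 n = t + Finsupp.single 0 d) :
    ∃ u, expS d n e l u ∧ s = u + Finsupp.single 0 d := by
  obtain ⟨a, b, c, h0, h1⟩ := hs
  obtain ⟨a', b', c', h0', h1'⟩ := ht
  have e0 : s 0 = t 0 + d := by simpa using DFunLike.congr_fun h 0
  have e1 : s 1 + n = t 1 := by simpa using DFunLike.congr_fun h 1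
  have hsu : s = t - Finsupp.single 1 n + Finsupp.single 0 d := by
    ext i
    fin_cases i
    · simp [e0]
    · simp; omega
  refine ⟨t - Finsupp.single 1 n, ?_, hsu⟩
  have u0 : (t - Finsupp.single 1 n : Fin 2 →₀ ℕ) 0 = t 0 := by simp
  have u1 : (t - Finsupp.single 1 n : Fin 2 →₀ ℕ) 1 = s 1 := by simp; omega
  rw [expS, u0, u1]
  rcases a with _ | a
  · have hc : c' < c := by
      by_contra hcc
      have := Nat.mul_le_mul_right e (not_lt.mp hcc)
      rw [h0', h0] at e0
      omega
    obtain ⟨f, rfl⟩ := Nat.exists_eq_add_of_lt hc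
    have hb : b + 1 ≤ b' ∨ n = 0 := by
      by_contra hcon
      push Not at hcon
      have h3 : b' * n ≤ b * n := Nat.mul_le_mul_right n (by omega)
      have h4 : c' * l ≤ (c' + f + 1) * l := Nat.mul_le_mul_right l (by omega)
      omega
    rcases hb with hb | hb
    · obtain ⟨g, rfl⟩ := Nat.exists_eq_add_of_le hb
      exact ⟨a', b + g, c', h0', by nlinarith⟩
    · subst hb
      exact ⟨a', 0, c', h0', by omega⟩
  · exact ⟨a, b, c, by nlinarith, h1⟩

lemma mem_adjoin_iff (k : Type*) [Field k] (d n e l : ℕ) (f : MvPolynomial (Fin 2) k) :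
    f ∈ Algebra.adjoin k
      ({X 0 ^ d, X 0 ^ e * X 1 ^ l, X 1 ^ n} : Set (MvPolynomial (Fin 2) k)) ↔
    ∀ m ∈ f.support, expS d n e l m := by
  classical
  constructor
  · intro hf
    induction hf using Algebra.adjoin_induction with
    | mem x hx =>
      intro m hm
      rcases hx with rfl | rfl | rfl
      · rw [X_pow_eq_monomial] at hm
        have := Finset.mem_singleton.mp (support_monomial_subset hm)
        subst this
        exact ⟨1, 0, 0, by simp, by simp⟩
      · rw [X_pow_eq_monomial, X_pow_eq_monomial, monomial_mul] at hm
        have := Finset.mem_singleton.mp (support_monomial_subset hm)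
        subst this
        exact ⟨0, 0, 1, by simp, by simp⟩
      · rw [X_pow_eq_monomial] at hm
        have := Finset.mem_singleton.mp (support_monomial_subset hm)
        subst this
        exact ⟨0, 1, 0, by simp, by simp⟩
    | algebraMap r =>
      intro m hm
      rw [algebraMap_eq, C_apply] at hm
      have := Finset.mem_singleton.mp (support_monomial_subset hm)
      subst this
      exact ⟨0, 0, 0, by simp, by simp⟩
    | add x y _ _ hx hy =>
      intro m hm
      rcases Finset.mem_union.mp (support_add hm) with h | h
      · exact hx m h
      · exact hy m h
    | mul x y _ _ hx hy =>
      intro m hm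
      obtain ⟨p, hp, q, hq, rfl⟩ := Finset.mem_add.mp (support_mul x y hm)
      obtain ⟨a, b, c, h0, h1⟩ := hx p hp
      obtain ⟨a', b', c', h0', h1'⟩ := hy q hq
      refine ⟨a + a', b + b', c + c', ?_, ?_⟩
      · simp only [Finsupp.add_apply, h0, h0']; ring
      · simp only [Finsupp.add_apply, h1, h1']; ring
  · intro hf
    rw [f.as_sum]
    refine Subalgebra.sum_mem _ fun m hm => ?_
    obtain ⟨a, b, c, h0, h1⟩ := hf m hm
    have : monomial m (coeff m f) = C (coeff m f) *
        ((X 0 ^ d) ^ a * (X 0 ^ e * X 1 ^ l) ^ c * (X 1 ^ n) ^ b) := by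
      rw [monomial_eq, Finsupp.prod_fintype _ _ (by simp), Fin.prod_univ_two, h0, h1]
      ring
    rw [this, ← algebraMap_eq]
    refine mul_mem (Subalgebra.algebraMap_mem _ _) (mul_mem (mul_mem ?_ ?_) ?_) <;>
      exact pow_mem (Algebra.subset_adjoin (by simp)) _

/-- Let `d, n > 0` and `(e,ℓ) ≠ (0,0)`.  Then the ring `k[x^d, x^e y^ℓ, y^n]` is
Cohen–Macaulay; equivalently, `x^d, y^n` is a regular sequence on it. -/
theorem stmt_13 (k : Type*) [Field k] (d n e l : ℕ) (hd : 0 < d) (hn : 0 < n)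
    (hel : (e, l) ≠ (0, 0))
    (R : Subalgebra k (MvPolynomial (Fin 2) k))
    (hR : R = Algebra.adjoin k
      ({X 0 ^ d, X 0 ^ e * X 1 ^ l, X 1 ^ n} : Set (MvPolynomial (Fin 2) k)))
    (xd yn : R)
    (hxd : (xd : MvPolynomial (Fin 2) k) = X 0 ^ d)
    (hyn : (yn : MvPolynomial (Fin 2) k) = X 1 ^ n) :
    RingTheory.Sequence.IsRegular R [xd, yn] := by
  have hmem : ∀ f, f ∈ R ↔ ∀ m ∈ f.support, expS d n e l m := by
    intro f; rw [hR]; exact mem_adjoin_iff k d n e l f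
  have hx0 : xd ≠ 0 := by
    intro h
    rw [h] at hxd
    exact pow_ne_zero d (X_ne_zero (R := k) (0 : Fin 2)) (by simpa using hxd.symm)
  have key : ∀ f g : R, yn * f = xd * g → ∃ h : R, f = xd * h := by
    intro f g hfg
    have hfg' : (f : MvPolynomial (Fin 2) k) * monomial (Finsupp.single 1 n) 1
        = (g : MvPolynomial (Fin 2) k) * monomial (Finsupp.single 0 d) 1 := by
      have := congrArg (Subtype.val) hfg
      simp only [MulMemClass.coe_mul, hxd, hyn, X_pow_eq_monomial] at this
      rw [mul_comm, this, mul_comm]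
    have hf := (hmem _).1 f.2
    have hg := (hmem _).1 g.2
    have hsupp : ∀ m ∈ (f : MvPolynomial (Fin 2) k).support,
        ∃ u, expS d n e l u ∧ m = u + Finsupp.single 0 d := by
      intro m hm
      have h1 := congrArg (coeff (m + Finsupp.single 1 n)) hfg'
      rw [coeff_mul_monomial, mul_one, coeff_mul_monomial', mul_one] at h1
      rw [mem_support_iff, h1] at hm
      split_ifs at hm with hle
      · refine expS_key d n e l hd m (m + Finsupp.single 1 n - Finsupp.single 0 d)
          (hf m ?_) (hg _ (mem_support_iff.2 hm)) (tsub_add_cancel_of_le hle).symm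
        rw [mem_support_iff, h1, if_pos hle]; exact hm
      · exact absurd rfl hm
    let q := (f : MvPolynomial (Fin 2) k).divMonomial (Finsupp.single 0 d)
    have hq : q ∈ R := by
      rw [hmem]
      intro u hu
      rw [mem_support_iff, coeff_divMonomial, ← mem_support_iff] at hu
      obtain ⟨v, hv, he⟩ := hsupp _ hu
      rw [add_comm] at he
      rw [add_right_cancel he]; exact hv
    refine ⟨⟨q, hq⟩, Subtype.ext ?_⟩
    rw [MulMemClass.coe_mul, hxd, X_pow_eq_monomial]
    ext m
    rw [coeff_monomial_mul', one_mul]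
    split_ifs with hle
    · rw [coeff_divMonomial, add_tsub_cancel_of_le hle]
    · by_contra hm
      obtain ⟨v, hv, he⟩ := hsupp m (mem_support_iff.2 hm)
      exact hle (he ▸ le_add_self)
  rw [RingTheory.Sequence.isRegular_iff]
  constructor
  · rw [RingTheory.Sequence.isWeaklyRegular_cons_iff, RingTheory.Sequence.isWeaklyRegular_cons_iff]
    refine ⟨?_, ?_, RingTheory.Sequence.IsWeaklyRegular.nil _ _⟩
    · intro a b hab
      exact mul_left_cancel₀ hx0 hab
    · rw [isSMulRegular_iff_right_eq_zero_of_smul]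
      intro z hz
      obtain ⟨f, rfl⟩ := Submodule.Quotient.mk_surjective _ z
      rw [← Submodule.Quotient.mk_smul, Submodule.Quotient.mk_eq_zero] at hz
      rw [Submodule.Quotient.mk_eq_zero]
      rw [Submodule.mem_smul_pointwise_iff_exists] at hz ⊢
      obtain ⟨g, -, hg⟩ := hz
      obtain ⟨h, hh⟩ := key f g hg.symm
      exact ⟨h, trivial, hh.symm⟩
  · intro htop
    let φ : R →+* k := constantCoeff.comp R.val.toRingHom
    have hle : Ideal.ofList [xd, yn] ≤ RingHom.ker φ := by
      rw [Ideal.ofList, Ideal.span_le]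
      intro r hr
      have : r = xd ∨ r = yn := by simpa using hr
      rcases this with rfl | rfl
      · change constantCoeff (r : MvPolynomial (Fin 2) k) = 0
        rw [hxd]; simp [hd.ne']
      · change constantCoeff (r : MvPolynomial (Fin 2) k) = 0
        rw [hyn]; simp [hn.ne']
    have h1 : (1 : R) ∈ Ideal.ofList [xd, yn] := by
      have h2 : (1 : R) ∈ (Ideal.ofList [xd, yn] • ⊤ : Submodule R R) := htop ▸ trivial
      simpa using h2
    have h3 := hle h1
    rw [RingHom.mem_ker, map_one] at h3
    exact one_ne_zero h3
end
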